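/- Let C⁰([0,1],0) be the closed subspace of the Banach space C([0,1]) (sup norm) consisting of continuous functions φ with ∫_0^1 φ = 0. For φ ∈ C⁰([0,1],0) and N ∈ C([0,1]), let Δφ be the unique C¹ function on [0,1] with ∫_0^1 Δφ = 0 and derivative D(Δφ) = (1/2)φ² + φN − ∫_0^1 ((1/2)φ² + φN). Then the map 𝒯 : C⁰([0,1],0) × C([0,1]) → C⁰([0,1],0), 𝒯(φ,N) = φ − Δφ, is of class C¹ (Fréchet differentiable with continuous derivative), its differential at (0,0) is (δφ, δN) ↦ δφ, and consequently for every N sufficiently close to 0 in C([0,1]) the map φ ↦ 𝒯(φ,N) is a C¹ diffeomorphism from a neighborhood of 0 in C⁰([0,1],0) onto another neighborhood of 0 in C⁰([0,1],0). -/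

import Mathlib

open Set Filter Topology

noncomputable section

/-- the unit interval `[0,1]`, as a compact topological space. -/
abbrev UI : Type := Set.Icc (0:ℝ) 1

/-- the extension of a continuous function on `[0,1]` to `ℝ` by projection. -/
def ext01 (f : C(UI, ℝ)) : ℝ → ℝ := fun t => f (Set.projIcc 0 1 zero_le_one t)

lemma ext01_cont (f : C(UI, ℝ)) : Continuous (ext01 f) :=
  f.continuous.comp continuous_projIcc

/-- the closed subspace `C⁰([0,1],0)` of continuous functions with zero mean. -/
def Cmean0 : Submodule ℝ C(UI, ℝ) where
  carrier := {f | (∫ t in (0:ℝ)..1, ext01 f t) = 0}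
  add_mem' := by
    intro a b ha hb
    simp only [Set.mem_setOf_eq] at *
    have h : Set.EqOn (ext01 (a + b)) (fun t => ext01 a t + ext01 b t) (Set.uIcc 0 1) := by
      intro t _; simp [ext01]
    rw [intervalIntegral.integral_congr h,
      intervalIntegral.integral_add ((ext01_cont a).intervalIntegrable _ _)
        ((ext01_cont b).intervalIntegrable _ _), ha, hb, add_zero]
  zero_mem' := by
    have h : Set.EqOn (ext01 0) (fun _ => (0:ℝ)) (Set.uIcc 0 1) := by
      intro t _; simp [ext01]
    simp [Set.mem_setOf_eq, intervalIntegral.integral_congr h]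
  smul_mem' := by
    intro c f hf
    simp only [Set.mem_setOf_eq] at *
    have h : Set.EqOn (ext01 (c • f)) (fun t => c * ext01 f t) (Set.uIcc 0 1) := by
      intro t _; simp [ext01]
    rw [intervalIntegral.integral_congr h, intervalIntegral.integral_const_mul, hf, mul_zero]

/-- `(1/2)φ² + φN`, extended to `ℝ`. -/
def gfun (φ N : C(UI, ℝ)) : ℝ → ℝ := fun t =>
  (1/2) * (ext01 φ t) ^ 2 + ext01 φ t * ext01 N t

/-- the primitive `x ↦ ∫_0^x ((1/2)φ²+φN)(y) dy - x ∫_0^1 ((1/2)φ²+φN)(y) dy`. -/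
def primG (φ N : C(UI, ℝ)) : ℝ → ℝ := fun x =>
  (∫ t in (0:ℝ)..x, gfun φ N t) - x * ∫ t in (0:ℝ)..1, gfun φ N t

/-- `Δφ`: the unique `C¹` function with `∫_0^1 Δφ = 0` and
`D(Δφ) = (1/2)φ² + φN - ∫_0^1 ((1/2)φ² + φN)`. -/
def DeltaF (φ N : C(UI, ℝ)) : ℝ → ℝ := fun x =>
  primG φ N x - ∫ s in (0:ℝ)..1, primG φ N s

/-!
Let `M` be the bounded operator sending `g` to the zero-mean primitive of `g - ∫ g`. Then
`𝒯(φ, N) = φ - M (φ * (φ / 2 + N)) = φ - B φ (φ, N)` for a bounded bilinear map `B`, so `𝒯` is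
smooth, fixes `φ = 0` for every `N`, and the quadratic term contributes nothing to its derivative
at `(0, 0)`. Thus the partial derivative in `φ` is the identity at `(0, 0)`; since it depends
continuously on `N` and invertible operators are open, the inverse function theorem applies
to `𝒯(·, N)` for all small `N`.
-/

open scoped ContDiff

section InverseFunction

variable {𝕜 E P F : Type*} [RCLike 𝕜] [NormedAddCommGroup E] [NormedSpace 𝕜 E]
  [NormedAddCommGroup P] [NormedSpace 𝕜 P] [NormedAddCommGroup F] [NormedSpace 𝕜 F]
  [CompleteSpace E] {n : ℕ∞ω}

theorem exists_openPartialHomeomorph_contDiffOn_symm {f : E → F} {a : E} {e : E ≃L[𝕜] F}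
    (hf : ContDiffAt 𝕜 n f a) (he : HasFDerivAt f (e : E →L[𝕜] F) a) (h0 : n ≠ 0)
    (hn : n ≠ ∞) :
    ∃ Φ : OpenPartialHomeomorph E F,
      ⇑Φ = f ∧ a ∈ Φ.source ∧ ContDiffOn 𝕜 n Φ.symm Φ.target :=
  let Φ := hf.toOpenPartialHomeomorph f he h0
  ⟨Φ.restrContDiff 𝕜 n hn, rfl,
    ⟨hf.mem_toOpenPartialHomeomorph_source he h0, hf, hf.to_localInverse he h0⟩,
    Φ.contDiffOn_restrContDiff_target 𝕜 hn⟩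

theorem eventually_exists_hasFDerivAt_equiv {f : E × P → F} {a : E} {p₀ : P} {e : E ≃L[𝕜] F}
    (hf : ContDiffAt 𝕜 1 f (a, p₀))
    (he : HasFDerivAt (fun x => f (x, p₀)) (e : E →L[𝕜] F) a) :
    ∀ᶠ p in 𝓝 p₀, ∃ e' : E ≃L[𝕜] F,
      HasFDerivAt (fun x => f (x, p)) (e' : E →L[𝕜] F) a := by
  let D : P → E →L[𝕜] F := fun p => (fderiv 𝕜 f (a, p)).comp (ContinuousLinearMap.inl 𝕜 E P)
  have tendsto_pair : Tendsto (fun p => (a, p)) (𝓝 p₀) (𝓝 (a, p₀)) :=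
    (Continuous.prodMk_right a).tendsto p₀
  have hasFDerivAt_slice : ∀ᶠ p in 𝓝 p₀, HasFDerivAt (fun x => f (x, p)) (D p) a := by
    filter_upwards [tendsto_pair.eventually (hf.eventually (by simp))] with p hp
    exact (hp.differentiableAt one_ne_zero).hasFDerivAt.comp a (hasFDerivAt_prodMk_left a p)
  have D_eq : D p₀ = e := hasFDerivAt_slice.self_of_nhds.unique he
  have continuousAt_D : ContinuousAt D p₀ :=
    ((hf.continuousAt_fderiv one_ne_zero).comp_of_eq tendsto_pair rfl).clm_comp
      continuousAt_const
  have D_mem_range : ∀ᶠ p in 𝓝 p₀, D p ∈ range ((↑) : (E ≃L[𝕜] F) → E →L[𝕜] F) :=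
    continuousAt_D.eventually_mem (D_eq ▸ e.nhds)
  filter_upwards [hasFDerivAt_slice, D_mem_range] with p hp ⟨e', he'⟩
  exact ⟨e', he' ▸ hp⟩

theorem eventually_exists_openPartialHomeomorph_contDiffOn_symm {f : E × P → F} {a : E} {p₀ : P}
    {e : E ≃L[𝕜] F} (hf : ContDiffAt 𝕜 n f (a, p₀))
    (he : HasFDerivAt (fun x => f (x, p₀)) (e : E →L[𝕜] F) a) (h0 : n ≠ 0) (hn : n ≠ ∞) :
    ∀ᶠ p in 𝓝 p₀, ∃ Φ : OpenPartialHomeomorph E F,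
      (⇑Φ = fun x => f (x, p)) ∧ a ∈ Φ.source ∧ ContDiffOn 𝕜 n Φ.symm Φ.target := by
  have hf₁ : ContDiffAt 𝕜 1 f (a, p₀) := hf.of_le (ENat.one_le_iff_ne_zero_withTop.2 h0)
  have contDiffAt_slice : ∀ᶠ p in 𝓝 p₀, ContDiffAt 𝕜 n (fun x => f (x, p)) a := by
    filter_upwards [((Continuous.prodMk_right a).tendsto p₀).eventually (hf.eventually hn)]
      with p hp
    exact hp.comp a (contDiffAt_id.prodMk contDiffAt_const)
  filter_upwards [contDiffAt_slice, eventually_exists_hasFDerivAt_equiv hf₁ he]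
    with p hp ⟨e', he'⟩
  exact exists_openPartialHomeomorph_contDiffOn_symm hp he' h0 hn

end InverseFunction

section QuadraticPerturbation

variable {𝕜 E P : Type*} [NormedAddCommGroup E] [NormedAddCommGroup P]

section NontriviallyNormedField

variable [NontriviallyNormedField 𝕜] [NormedSpace 𝕜 E] [NormedSpace 𝕜 P]
  (B : E →L[𝕜] E × P →L[𝕜] E)

/-- The quadratic perturbation `(x, p) ↦ x - B x (x, p)` of the first projection by a bounded
bilinear map. Letting the second argument of `B` be the whole pair makes the terms `φ²` and `φN`
of `𝒯` a single bilinear one. -/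
def fstSubBilinear (q : E × P) : E := q.1 - B q.1 q

theorem fstSubBilinear_zero_left (p : P) : fstSubBilinear B (0, p) = 0 := by
  simp [fstSubBilinear]

theorem contDiff_fstSubBilinear {n : ℕ∞ω} : ContDiff 𝕜 n (fstSubBilinear B) :=
  contDiff_fst.sub ((B.contDiff.comp contDiff_fst).clm_apply contDiff_id)

theorem hasFDerivAt_fstSubBilinear_zero :
    HasFDerivAt (fstSubBilinear B) (ContinuousLinearMap.fst 𝕜 E P) 0 := by
  have hB : HasFDerivAt (fun q : E × P => B q.1 q) (0 : E × P →L[𝕜] E) 0 :=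
    (B.hasFDerivAt_of_bilinear hasFDerivAt_fst (hasFDerivAt_id 0)).congr_fderiv (by ext <;> simp)
  exact (hasFDerivAt_fst.sub hB).congr_fderiv (sub_zero _)

end NontriviallyNormedField

theorem eventually_exists_openPartialHomeomorph_fstSubBilinear [RCLike 𝕜] [NormedSpace 𝕜 E]
    [NormedSpace 𝕜 P] [CompleteSpace E] (B : E →L[𝕜] E × P →L[𝕜] E) {n : ℕ∞ω} (h0 : n ≠ 0)
    (hn : n ≠ ∞) :
    ∀ᶠ p in 𝓝 (0 : P), ∃ Φ : OpenPartialHomeomorph E E,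
      (⇑Φ = fun x => fstSubBilinear B (x, p)) ∧ 0 ∈ Φ.source ∧
        ContDiffOn 𝕜 n Φ.symm Φ.target := by
  have he : HasFDerivAt (fun x => fstSubBilinear B (x, 0))
      (ContinuousLinearEquiv.refl 𝕜 E : E →L[𝕜] E) 0 :=
    (hasFDerivAt_fstSubBilinear_zero B).comp (f := (·, 0)) 0 (hasFDerivAt_prodMk_left 0 0)
  exact eventually_exists_openPartialHomeomorph_contDiffOn_symm
    (contDiff_fstSubBilinear B).contDiffAt he h0 hn

end QuadraticPerturbation

section ZeroMeanPrimitive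

/-- The Volterra operator `f ↦ (x ↦ ∫₀ˣ f)` on `C([0,1])`. -/
def volterra : C(UI, ℝ) →L[ℝ] C(UI, ℝ) :=
  LinearMap.mkContinuous
    { toFun f :=
        { toFun x := ∫ t in (0:ℝ)..x, ext01 f t
          continuous_toFun :=
            (intervalIntegral.continuous_primitive
              (fun _ _ => (ext01_cont f).intervalIntegrable _ _) 0).comp continuous_subtype_val }
      map_add' f g := ContinuousMap.ext fun _ =>
        intervalIntegral.integral_add ((ext01_cont f).intervalIntegrable _ _)
          ((ext01_cont g).intervalIntegrable _ _)
      map_smul' c _ := ContinuousMap.ext fun _ => intervalIntegral.integral_const_mul c _ }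
    1 fun f => by
      refine (ContinuousMap.norm_le _ (by positivity)).2 fun x => ?_
      calc ‖∫ t in (0:ℝ)..x, ext01 f t‖ ≤ ‖f‖ * |(x : ℝ) - 0| :=
            intervalIntegral.norm_integral_le_of_norm_le_const fun _ _ => f.norm_coe_le_norm _
        _ ≤ ‖f‖ * 1 := by
            gcongr
            rw [sub_zero, abs_of_nonneg x.2.1]
            exact x.2.2
        _ = 1 * ‖f‖ := mul_comm _ _

/-- The integral over `[0,1]` as a bounded functional. -/
def integral01 : C(UI, ℝ) →L[ℝ] ℝ := ContinuousMap.evalCLM ℝ 1 ∘L volterra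

theorem volterra_apply (f : C(UI, ℝ)) (x : UI) : volterra f x = ∫ t in (0:ℝ)..x, ext01 f t := rfl

theorem integral01_apply (f : C(UI, ℝ)) : integral01 f = ∫ t in (0:ℝ)..1, ext01 f t := rfl

theorem integral01_one : integral01 1 = 1 := by
  simp [integral01_apply, ext01]

theorem mem_Cmean0_iff {f : C(UI, ℝ)} : f ∈ Cmean0 ↔ integral01 f = 0 := Iff.rfl

instance completeSpace_Cmean0 : CompleteSpace Cmean0 :=
  integral01.isClosed_ker.completeSpace_coe

/-- The projection `f ↦ f - ∫ f` of `C([0,1])` onto `C⁰([0,1],0)` along the constants. -/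
def subMean : C(UI, ℝ) →L[ℝ] Cmean0 :=
  (ContinuousLinearMap.id ℝ _ - integral01.smulRight 1).codRestrict Cmean0 fun f => by
    simp [mem_Cmean0_iff, integral01_one]

theorem subMean_apply (f : C(UI, ℝ)) (x : UI) :
    (subMean f : C(UI, ℝ)) x = f x - integral01 f := by
  simp [subMean]

/-- The operator sending `f` to the zero-mean primitive of `f - ∫ f`. -/
def zeroMeanPrimitive : C(UI, ℝ) →L[ℝ] Cmean0 :=
  subMean ∘L volterra ∘L Cmean0.subtypeL ∘L subMean

theorem volterra_subMean_apply (f : C(UI, ℝ)) (x : UI) :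
    volterra (subMean f) x =
      (∫ t in (0:ℝ)..x, ext01 f t) - x * ∫ t in (0:ℝ)..1, ext01 f t := by
  have volterra_one : volterra 1 x = x := by simp [volterra_apply, ext01]
  simp [subMean, volterra_one, ← volterra_apply, ← integral01_apply, mul_comm]

theorem integral01_eq_integral {f : C(UI, ℝ)} {g : ℝ → ℝ} (h : ∀ x : UI, f x = g x) :
    integral01 f = ∫ t in (0:ℝ)..1, g t := by
  rw [integral01_apply]
  refine intervalIntegral.integral_congr fun t ht => ?_
  rw [uIcc_of_le zero_le_one] at ht
  simpa only [ext01, projIcc_of_mem zero_le_one ht] using h ⟨t, ht⟩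

end ZeroMeanPrimitive

section Delta

theorem gfun_eq_ext01 (φ N : C(UI, ℝ)) : gfun φ N = ext01 (φ * ((1 / 2 : ℝ) • φ + N)) := by
  funext t
  simp only [gfun, ext01, ContinuousMap.mul_apply, ContinuousMap.add_apply,
    ContinuousMap.smul_apply, smul_eq_mul]
  ring

theorem primG_eq_volterra_subMean (φ N : C(UI, ℝ)) (x : UI) :
    primG φ N x = volterra (subMean (φ * ((1 / 2 : ℝ) • φ + N))) x := by
  rw [volterra_subMean_apply, primG, gfun_eq_ext01]

theorem DeltaF_eq_zeroMeanPrimitive (φ N : C(UI, ℝ)) (x : UI) :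
    DeltaF φ N x = (zeroMeanPrimitive (φ * ((1 / 2 : ℝ) • φ + N)) : C(UI, ℝ)) x := by
  have h := fun y => (primG_eq_volterra_subMean φ N y).symm
  rw [DeltaF, ← integral01_eq_integral h, ← h]
  exact (subMean_apply _ x).symm

/-- The bounded bilinear map `(φ, (ψ, N)) ↦ M (φ * (ψ / 2 + N))`, with `M` the zero-mean
primitive, whose values `B φ (φ, N)` are `Δφ`. -/
def deltaBilinear : Cmean0 →L[ℝ] Cmean0 × C(UI, ℝ) →L[ℝ] Cmean0 :=
  ContinuousLinearMap.bilinearComp (𝕜₁' := ℝ) (𝕜₂' := ℝ) (E' := Cmean0) (F' := Cmean0 × C(UI, ℝ))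
    (ContinuousLinearMap.compL ℝ C(UI, ℝ) C(UI, ℝ) Cmean0 zeroMeanPrimitive ∘L
      ContinuousLinearMap.mul ℝ C(UI, ℝ))
    Cmean0.subtypeL
    (((1 / 2 : ℝ) • Cmean0.subtypeL).coprod (ContinuousLinearMap.id ℝ C(UI, ℝ)))

/-- The map `𝒯(φ, N) = φ - Δφ`. -/
def subDelta : Cmean0 × C(UI, ℝ) → Cmean0 :=
  fstSubBilinear (𝕜 := ℝ) (E := Cmean0) (P := C(UI, ℝ)) deltaBilinear

theorem subDelta_apply (φ : Cmean0) (N : C(UI, ℝ)) (x : UI) :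
    (subDelta (φ, N) : C(UI, ℝ)) x = (φ : C(UI, ℝ)) x - DeltaF φ N x :=
  congrArg ((φ : C(UI, ℝ)) x - ·) (DeltaF_eq_zeroMeanPrimitive φ N x).symm

end Delta

/-- the map `𝒯(φ,N) = φ - Δφ` on `C⁰([0,1],0) × C([0,1])` is `C¹`, its
differential at `(0,0)` is `(δφ, δN) ↦ δφ`, and for every `N` close enough to `0` the map
`φ ↦ 𝒯(φ,N)` is a `C¹` diffeomorphism between neighbourhoods of `0` in `C⁰([0,1],0)`. -/
theorem stmt14 :
    ∃ T : (Cmean0 × C(UI, ℝ)) → Cmean0,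
      (∀ (φ : Cmean0) (N : C(UI, ℝ)) (x : UI),
        ((T (φ, N) : C(UI, ℝ)) x = (φ : C(UI, ℝ)) x - DeltaF (φ : C(UI, ℝ)) N (x : ℝ))) ∧
      ContDiff ℝ 1 T ∧
      HasFDerivAt T (ContinuousLinearMap.fst ℝ Cmean0 C(UI, ℝ)) 0 ∧
      ∃ ε : ℝ, 0 < ε ∧ ∀ N : C(UI, ℝ), ‖N‖ < ε →
        ∃ U V : Set Cmean0, IsOpen U ∧ (0 : Cmean0) ∈ U ∧ IsOpen V ∧ (0 : Cmean0) ∈ V ∧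
          (fun φ => T (φ, N)) '' U = V ∧ Set.InjOn (fun φ => T (φ, N)) U ∧
          ∃ Ti : Cmean0 → Cmean0, ContDiffOn ℝ 1 Ti V ∧
            (∀ φ ∈ U, Ti (T (φ, N)) = φ) ∧ ∀ ψ ∈ V, T (Ti ψ, N) = ψ := by
  obtain ⟨ε, hε, local_inverse⟩ := Metric.eventually_nhds_iff.1
    (eventually_exists_openPartialHomeomorph_fstSubBilinear (𝕜 := ℝ) (E := Cmean0)
      (P := C(UI, ℝ)) deltaBilinear (n := 1) one_ne_zero (by simp))
  refine ⟨subDelta, subDelta_apply, contDiff_fstSubBilinear _, hasFDerivAt_fstSubBilinear_zero _,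
    ε, hε, fun N hN => ?_⟩
  obtain ⟨Φ, hΦ, zero_mem_source, contDiffOn_symm⟩ := local_inverse (by simpa using hN)
  have hΦ_apply (φ : Cmean0) : subDelta (φ, N) = Φ φ := (congrFun hΦ φ).symm
  have Φ_zero : Φ 0 = 0 := (hΦ_apply 0).symm.trans (fstSubBilinear_zero_left _ N)
  have zero_mem_target : 0 ∈ Φ.target := Φ_zero ▸ Φ.map_source zero_mem_source
  simp only [hΦ_apply]
  exact ⟨Φ.source, Φ.target, Φ.open_source, zero_mem_source, Φ.open_target, zero_mem_target,
    Φ.image_source_eq_target, Φ.injOn, Φ.symm, contDiffOn_symm, fun _ => Φ.left_inv,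
    fun _ => Φ.right_inv⟩

end
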